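/- arXiv:2601.00641 — 3 statements merged into one kernel-verified Lean document; each statement's English description precedes it below -/
import Mathlib

section
/- Suppose p > 0, q⁺⁺ > 1/2, and 0 < q⁻⁺ < 1/2, and let the hallucination-selection probability be h(K) = ((1-p)·q⁻⁺·Q⁻⁺(K)) / (p·q⁺⁺·Q⁺⁺(K) + (1-p)·q⁻⁺·Q⁻⁺(K)), where Q⁻⁺(K) ≤ exp(-2K·(1/2 - q⁻⁺)^2) and Q⁺⁺(K) ≥ 1 - exp(-2K·(q⁺⁺ - 1/2)^2). Then h(K) ≤ ((1-p)·q⁻⁺ / (p·q⁺⁺·Q⁺⁺(K)))·exp(-2K·(1/2 - q⁻⁺)^2), and h(K) → 0 exponentially fast as K → ∞. -/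
/-!
Discarding the hallucination term from the denominator gives
`h(K) ≤ (1-p)·q⁻⁺·Q⁻⁺(K) / (p·q⁺⁺·Q⁺⁺(K))`, and Hoeffding's bound on `Q⁻⁺` yields the pointwise
estimate. Its prefactor depends on `K`, but `Q⁺⁺(K) ≥ 1/2` for all large `K`, so `h(K)` is at most
a constant multiple of `Q⁻⁺(K)` and inherits its exponential decay.
-/

open Filter Asymptotics Topology

lemma mul_div_add_mul_le {𝕜 : Type*} [Field 𝕜] [LinearOrder 𝕜] [IsStrictOrderedRing 𝕜]
    {a b x y : 𝕜} (ha : 0 ≤ a) (hb : 0 < b) (hx : 0 ≤ x) (hxy : x ≤ y) :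
    a * x / (b + a * x) ≤ a / b * y := by
  have hax : 0 ≤ a * x := mul_nonneg ha hx
  calc a * x / (b + a * x) ≤ a * x / b :=
        div_le_div_of_nonneg_left hax hb (le_add_of_nonneg_right hax)
    _ = a / b * x := mul_div_right_comm a x b
    _ ≤ a / b * y := mul_le_mul_of_nonneg_left hxy (div_nonneg ha hb.le)

lemma isBigO_mul_div_add_mul {ι : Type*} {l : Filter ι} {a b δ : ℝ} {f g : ι → ℝ}
    (ha : 0 ≤ a) (hb : 0 < b) (hδ : 0 < δ) (hf : ∀ᶠ i in l, 0 ≤ f i)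
    (hg : ∀ᶠ i in l, δ ≤ g i) :
    (fun i ↦ a * f i / (b * g i + a * f i)) =O[l] f := by
  refine IsBigO.of_bound (a / (b * δ)) ?_
  filter_upwards [hf, hg] with i hfi hgi
  have hbg : 0 < b * g i := mul_pos hb (hδ.trans_le hgi)
  have hratio : 0 ≤ a * f i / (b * g i + a * f i) := by positivity
  rw [Real.norm_of_nonneg hratio, Real.norm_of_nonneg hfi]
  calc a * f i / (b * g i + a * f i) ≤ a / (b * g i) * f i :=
        mul_div_add_mul_le ha hbg hfi le_rfl
    _ ≤ a / (b * δ) * f i := by gcongr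

lemma tendsto_exp_mul_natCast_mul_atTop {r s : ℝ} (hr : r < 0) (hs : 0 < s) :
    Tendsto (fun n : ℕ ↦ Real.exp (r * n * s)) atTop (𝓝 0) :=
  Real.tendsto_exp_atBot.comp
    ((tendsto_natCast_atTop_atTop.const_mul_atTop_of_neg hr).atBot_mul_const hs)

lemma eventually_half_le_of_one_sub_exp_le {r s : ℝ} (hr : r < 0) (hs : 0 < s) {g : ℕ → ℝ}
    (hg : ∀ n : ℕ, 1 - Real.exp (r * n * s) ≤ g n) : ∀ᶠ n in atTop, 1 / 2 ≤ g n := by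
  filter_upwards [(tendsto_exp_mul_natCast_mul_atTop hr hs).eventually_le_const one_half_pos]
    with n hn
  linarith [hg n]

theorem stmt_14_general {a b s t : ℝ} (ha : 0 ≤ a) (hb : 0 < b) (hs : 0 < s)
    {Qpp Qmp h : ℕ → ℝ} (hQpp_pos : ∀ K, 0 < Qpp K) (hQmp_nonneg : ∀ K, 0 ≤ Qmp K)
    (hQpp_bound : ∀ K : ℕ, 1 - Real.exp (-2 * K * s) ≤ Qpp K)
    (hQmp_bound : ∀ K : ℕ, Qmp K ≤ Real.exp (-2 * K * t))
    (hdef : ∀ K, h K = a * Qmp K / (b * Qpp K + a * Qmp K)) :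
    (∀ K : ℕ, h K ≤ a / (b * Qpp K) * Real.exp (-2 * K * t)) ∧
      h =O[atTop] fun K : ℕ ↦ Real.exp (-2 * K * t) := by
  constructor
  · intro K
    rw [hdef K]
    exact mul_div_add_mul_le ha (mul_pos hb (hQpp_pos K)) (hQmp_nonneg K) (hQmp_bound K)
  · have hQpp_half : ∀ᶠ K in atTop, 1 / 2 ≤ Qpp K :=
      eventually_half_le_of_one_sub_exp_le (by norm_num) hs hQpp_bound
    have hQmp_isBigO : Qmp =O[atTop] fun K : ℕ ↦ Real.exp (-2 * K * t) :=
      isBigO_of_le _ fun K ↦ by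
        rw [Real.norm_of_nonneg (hQmp_nonneg K), Real.norm_of_nonneg (Real.exp_nonneg _)]
        exact hQmp_bound K
    rw [funext hdef]
    exact (isBigO_mul_div_add_mul ha hb one_half_pos (.of_forall hQmp_nonneg) hQpp_half).trans
      hQmp_isBigO

/-- Suppose `p > 0`, `q⁺⁺ > 1/2`, `0 < q⁻⁺ < 1/2`, and the ensemble rates satisfy
the Hoeffding bounds `Q⁻⁺(K) ≤ exp(-2K(1/2-q⁻⁺)²)` and
`Q⁺⁺(K) ≥ 1 - exp(-2K(q⁺⁺-1/2)²)`.  Then the hallucination-selection probability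
`h(K) = ((1-p)·q⁻⁺·Q⁻⁺(K)) / (p·q⁺⁺·Q⁺⁺(K) + (1-p)·q⁻⁺·Q⁻⁺(K))` satisfies
`h(K) ≤ ((1-p)·q⁻⁺ / (p·q⁺⁺·Q⁺⁺(K)))·exp(-2K(1/2-q⁻⁺)²)` and `h(K) → 0` as
`K → ∞`. -/
theorem stmt_14 (p qpp qmp : ℝ)
    (hp0 : 0 < p) (hp1 : p ≤ 1)
    (hqpp : 1 / 2 < qpp) (hqpp1 : qpp ≤ 1)
    (hqmp0 : 0 < qmp) (hqmp : qmp < 1 / 2)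
    (Qpp Qmp : ℕ → ℝ)
    (hQpp_pos : ∀ K, 0 < Qpp K)
    (hQmp_nonneg : ∀ K, 0 ≤ Qmp K)
    (hQpp_bound : ∀ K : ℕ, 1 - Real.exp (-2 * K * (qpp - 1 / 2) ^ 2) ≤ Qpp K)
    (hQmp_bound : ∀ K : ℕ, Qmp K ≤ Real.exp (-2 * K * (1 / 2 - qmp) ^ 2))
    (h : ℕ → ℝ)
    (hdef : ∀ K, h K =
      ((1 - p) * qmp * Qmp K) / (p * qpp * Qpp K + (1 - p) * qmp * Qmp K)) :
    (∀ K : ℕ, h K ≤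
        ((1 - p) * qmp / (p * qpp * Qpp K)) * Real.exp (-2 * K * (1 / 2 - qmp) ^ 2)) ∧
      Filter.Tendsto h Filter.atTop (nhds 0) := by
  have hweight_incorrect : 0 ≤ (1 - p) * qmp := mul_nonneg (sub_nonneg.2 hp1) hqmp0.le
  have hweight_correct : 0 < p * qpp := mul_pos hp0 (one_half_pos.trans hqpp)
  have hrate_correct : 0 < (qpp - 1 / 2) ^ 2 := pow_pos (sub_pos.2 hqpp) 2
  have hrate_incorrect : 0 < (1 / 2 - qmp) ^ 2 := pow_pos (sub_pos.2 hqmp) 2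
  exact (stmt_14_general hweight_incorrect hweight_correct hrate_correct hQpp_pos hQmp_nonneg
    hQpp_bound hQmp_bound hdef).imp_right fun hdecay ↦
      hdecay.trans_tendsto (tendsto_exp_mul_natCast_mul_atTop (by norm_num) hrate_incorrect)
end

section
/- Combining the pipeline-failure bound and the Hoeffding judge bounds: under run-correctness probability p > 0, base judge rates q⁺⁺ > 1/2 and q⁻⁺ < 1/2, for every ε > 0 there exist N and K such that both the pipeline-failure probability (1 - (p·q⁺⁺ + (1-p)·q⁻⁺))^N < ε and the conditional hallucination-selection probability ((1-p)·q⁻⁺·Q⁻⁺(K)) / (p·q⁺⁺·Q⁺⁺(K) + (1-p)·q⁻⁺·Q⁻⁺(K)) < ε; hence any specific task with non-zero per-run success probability can be solved to arbitrarily high reliability. -/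
/-!
The two failure modes are controlled separately. A repetition is accepted with a fixed positive
probability, so the probability that none of `N` repetitions is accepted decays geometrically.
Among accepted runs the hallucinated share is `u / (v + u)`, where `u` is the weight of accepted
incorrect runs and `v` that of accepted correct ones; all one needs of the ensemble judge is
`u = o(v)`, i.e. that it rejects incorrect runs in the limit while the rate at which it accepts
correct ones stays away from `0`. Hoeffding's bounds give both.
-/

open Filter Asymptotics Topology

theorem tendsto_div_add_self_of_isLittleO {α 𝕜 : Type*} [NormedField 𝕜] {l : Filter α}
    {u v : α → 𝕜} (h : u =o[l] v) : Tendsto (fun x ↦ u x / (v x + u x)) l (𝓝 0) :=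
  (h.trans_isBigO h.right_isBigO_add').tendsto_div_nhds_zero

theorem one_isBigO_of_one_sub_le {α : Type*} {l : Filter α} {f e : α → ℝ}
    (he : Tendsto e l (𝓝 0)) (hf : ∀ᶠ x in l, 1 - e x ≤ f x) : (fun _ ↦ (1 : ℝ)) =O[l] f := by
  refine isBigO_const_left_iff_pos_le_norm one_ne_zero |>.2 ⟨1 / 2, by norm_num, ?_⟩
  filter_upwards [he.eventually_le_const (by norm_num : (0 : ℝ) < 1 / 2), hf] with x hx hfx
  calc
    1 / 2 ≤ f x := by linarith
    _ ≤ ‖f x‖ := Real.le_norm_self _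

theorem tendsto_exp_neg_two_mul_natCast_mul_sq {c : ℝ} (hc : c ≠ 0) :
    Tendsto (fun K : ℕ ↦ Real.exp (-2 * K * c ^ 2)) atTop (𝓝 0) := by
  have hrate : -2 * c ^ 2 < 0 := by nlinarith [sq_pos_of_ne_zero hc]
  refine Real.tendsto_exp_atBot.comp ?_
  simpa only [mul_right_comm] using tendsto_natCast_atTop_atTop.const_mul_atTop_of_neg hrate

theorem tendsto_pipeline_failure_prob {p qpp qmp : ℝ} (hp0 : 0 < p) (hp1 : p ≤ 1)
    (hqpp0 : 0 < qpp) (hqpp1 : qpp ≤ 1) (hqmp0 : 0 ≤ qmp) (hqmp1 : qmp ≤ 1) :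
    Tendsto (fun N : ℕ ↦ (1 - (p * qpp + (1 - p) * qmp)) ^ N) atTop (𝓝 0) := by
  have hincorrect : 0 ≤ 1 - p := sub_nonneg.2 hp1
  have haccept_pos : 0 < p * qpp + (1 - p) * qmp := by positivity
  have haccept_le_one : p * qpp + (1 - p) * qmp ≤ 1 :=
    convex_Iic (1 : ℝ) hqpp1 hqmp1 hp0.le hincorrect (add_sub_cancel p 1)
  exact tendsto_pow_atTop_nhds_zero_of_lt_one (sub_nonneg.2 haccept_le_one)
    (sub_lt_self 1 haccept_pos)

theorem tendsto_hallucination_selection_prob {α : Type*} {l : Filter α} {p qpp : ℝ} (qmp : ℝ)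
    {Qpp Qmp : α → ℝ} (hp : p ≠ 0) (hqpp : qpp ≠ 0)
    (hQpp : (fun _ ↦ (1 : ℝ)) =O[l] Qpp) (hQmp : Tendsto Qmp l (𝓝 0)) :
    Tendsto (fun K ↦ (1 - p) * qmp * Qmp K / (p * qpp * Qpp K + (1 - p) * qmp * Qmp K))
      l (𝓝 0) := by
  have hQ : Qmp =o[l] Qpp := ((isLittleO_one_iff ℝ).2 hQmp).trans_isBigO hQpp
  exact tendsto_div_add_self_of_isLittleO
    ((hQ.const_mul_left _).const_mul_right (mul_ne_zero hp hqpp))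

theorem stmt_16_general (p qpp qmp : ℝ)
    (hp0 : 0 < p) (hp1 : p ≤ 1)
    (hqpp0 : 0 < qpp) (hqpp1 : qpp ≤ 1)
    (hqmp0 : 0 ≤ qmp) (hqmp1 : qmp ≤ 1)
    (Qpp Qmp : ℕ → ℝ)
    (hQpp : (fun _ ↦ (1 : ℝ)) =O[atTop] Qpp)
    (hQmp : Tendsto Qmp atTop (𝓝 0))
    (ε : ℝ) (hε : 0 < ε) :
    ∀ᶠ NK : ℕ × ℕ in atTop,
      (1 - (p * qpp + (1 - p) * qmp)) ^ NK.1 < ε ∧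
      ((1 - p) * qmp * Qmp NK.2) / (p * qpp * Qpp NK.2 + (1 - p) * qmp * Qmp NK.2) < ε := by
  have hfailure := tendsto_pipeline_failure_prob hp0 hp1 hqpp0 hqpp1 hqmp0 hqmp1
  have hhallucination := tendsto_hallucination_selection_prob qmp hp0.ne' hqpp0.ne' hQpp hQmp
  rw [← prod_atTop_atTop_eq]
  exact (hfailure.eventually_lt_const hε).prod_mk (hhallucination.eventually_lt_const hε)

/-- Combining the pipeline-failure bound and the Hoeffding judge bounds: under
run-correctness probability `p > 0`, base judge rates `q⁺⁺ > 1/2` and `q⁻⁺ < 1/2`,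
for every `ε > 0` there exist `N` and `K` such that both the pipeline-failure
probability `(1 - (p·q⁺⁺ + (1-p)·q⁻⁺))^N < ε` and the conditional
hallucination-selection probability
`((1-p)·q⁻⁺·Q⁻⁺(K)) / (p·q⁺⁺·Q⁺⁺(K) + (1-p)·q⁻⁺·Q⁻⁺(K)) < ε`: any specific task
with non-zero per-run success probability can be solved to arbitrarily high
reliability. -/
theorem stmt_16 (p qpp qmp : ℝ)
    (hp0 : 0 < p) (hp1 : p ≤ 1)
    (hqpp : 1 / 2 < qpp) (hqpp1 : qpp ≤ 1)
    (hqmp0 : 0 ≤ qmp) (hqmp : qmp < 1 / 2)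
    (Qpp Qmp : ℕ → ℝ)
    (hQmp_nonneg : ∀ K, 0 ≤ Qmp K)
    (hQpp_bound : ∀ K : ℕ, 1 - Real.exp (-2 * K * (qpp - 1 / 2) ^ 2) ≤ Qpp K)
    (hQmp_bound : ∀ K : ℕ, Qmp K ≤ Real.exp (-2 * K * (1 / 2 - qmp) ^ 2))
    (ε : ℝ) (hε : 0 < ε) :
    ∃ N K : ℕ,
      (1 - (p * qpp + (1 - p) * qmp)) ^ N < ε ∧
      ((1 - p) * qmp * Qmp K) / (p * qpp * Qpp K + (1 - p) * qmp * Qmp K) < ε := by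
  have hQpp : (fun _ ↦ (1 : ℝ)) =O[atTop] Qpp :=
    one_isBigO_of_one_sub_le (tendsto_exp_neg_two_mul_natCast_mul_sq (sub_pos.2 hqpp).ne')
      (.of_forall hQpp_bound)
  have hQmp : Tendsto Qmp atTop (𝓝 0) :=
    squeeze_zero hQmp_nonneg hQmp_bound
      (tendsto_exp_neg_two_mul_natCast_mul_sq (sub_pos.2 hqmp).ne')
  exact Prod.exists.1 (stmt_16_general p qpp qmp hp0 hp1 (by linarith) hqpp1 hqmp0 (by linarith)
    Qpp Qmp hQpp hQmp ε hε).exists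
end

section
/- For K i.i.d. Bernoulli(q) votes with q < 1/2 and K odd, the majority-acceptance probability Σ_{i=(K+1)/2}^{K} C(K,i)·q^i·(1-q)^{K-i} is strictly less than q for all K ≥ 3; that is, an odd majority vote of K ≥ 3 better-than-random judges has a strictly smaller false-positive rate than a single judge. -/
/-!
Write `T x y` for the sum of the terms of the binomial expansion of `(x + y) ^ n` in which `x` has
exponent at least `r`, where `n < 2 * r`. Reflecting `i ↦ n - i` turns `T y x` into terms of the
same expansion disjoint from those of `T x y`, so `T x y + T y x ≤ (x + y) ^ n`.
If `0 < x < y`, then `n - i < i` for every `r ≤ i`, so the `i`-th term of `T x y` times `y` is at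
most the `i`-th term of `T y x` times `x`, strictly for `i = n ≥ 2`; hence
`T x y * y < T y x * x`. Adding `T x y * x` to both sides gives
`T x y * (x + y) < (x + y) ^ n * x`, which for `x = q` and `y = 1 - q` reads `T q (1 - q) < q`.
-/

open Finset

/-- The part of the binomial expansion of `(x + y) ^ n` in which `x` has exponent at least `r`.
For `x = q` and `y = 1 - q` it is the probability of at least `r` positive votes among `n`
independent Bernoulli(`q`) votes; keeping `x` and `y` separate makes the symmetry between
them available and avoids subtraction. -/
def binomialTail {R : Type*} [CommSemiring R] (n r : ℕ) (x y : R) : R :=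
  ∑ i ∈ Icc r n, (n.choose i : R) * x ^ i * y ^ (n - i)

lemma binomialTail_swap_eq_sum_range {R : Type*} [CommSemiring R] (n r : ℕ) (x y : R) :
    binomialTail n r y x = ∑ i ∈ range (n + 1 - r), (n.choose i : R) * x ^ i * y ^ (n - i) := by
  have hreflect :=
    sum_Ico_reflect (fun i ↦ (n.choose i : R) * x ^ i * y ^ (n - i)) r (le_refl (n + 1))
  rw [Nat.sub_self, Nat.Ico_zero_eq_range, Ico_add_one_right_eq_Icc] at hreflect
  rw [← hreflect, binomialTail]
  refine sum_congr rfl fun i hi ↦ ?_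
  have hin : i ≤ n := (mem_Icc.mp hi).2
  rw [Nat.choose_symm hin, Nat.sub_sub_self hin, mul_right_comm]

section OrderedSemiring

variable {R : Type*} [CommSemiring R] [PartialOrder R] {x y : R} {i j n r : ℕ}

lemma binomialTail_add_swap_le [IsOrderedRing R] (hx : 0 ≤ x) (hy : 0 ≤ y) (hr : n < 2 * r) :
    binomialTail n r x y + binomialTail n r y x ≤ (x + y) ^ n := by
  have hdisj : Disjoint (Icc r n) (range (n + 1 - r)) := by
    refine disjoint_left.mpr fun i hi hi' ↦ ?_
    rw [mem_Icc] at hi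
    rw [mem_range] at hi'
    omega
  have hsub : Icc r n ∪ range (n + 1 - r) ⊆ range (n + 1) := by
    intro i hi
    rw [mem_union, mem_Icc, mem_range] at hi
    rw [mem_range]
    omega
  calc binomialTail n r x y + binomialTail n r y x
      = ∑ i ∈ Icc r n ∪ range (n + 1 - r), (n.choose i : R) * x ^ i * y ^ (n - i) := by
        rw [binomialTail_swap_eq_sum_range n r x y, sum_union hdisj, binomialTail]
    _ ≤ ∑ i ∈ range (n + 1), (n.choose i : R) * x ^ i * y ^ (n - i) :=
        sum_le_sum_of_subset_of_nonneg hsub fun i _ _ ↦ by positivity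
    _ = (x + y) ^ n := by
        rw [add_pow]
        exact sum_congr rfl fun i _ ↦ by ring

lemma pow_mul_pow_le_pow_mul_pow_swap [IsOrderedRing R] (hx : 0 ≤ x) (hxy : x ≤ y) (hji : j ≤ i) :
    x ^ i * y ^ j ≤ x ^ j * y ^ i := by
  have hy : 0 ≤ y := hx.trans hxy
  obtain ⟨d, rfl⟩ := Nat.exists_eq_add_of_le hji
  calc x ^ (j + d) * y ^ j = x ^ j * y ^ j * x ^ d := by ring
    _ ≤ x ^ j * y ^ j * y ^ d := by gcongr
    _ = x ^ j * y ^ (j + d) := by ring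

variable [IsStrictOrderedRing R]

lemma pow_mul_pow_lt_pow_mul_pow_swap (hx : 0 < x) (hxy : x < y) (hji : j < i) :
    x ^ i * y ^ j < x ^ j * y ^ i := by
  have hy : 0 < y := hx.trans hxy
  obtain ⟨d, rfl⟩ := Nat.exists_eq_add_of_le hji.le
  have hd : d ≠ 0 := by omega
  calc x ^ (j + d) * y ^ j = x ^ j * y ^ j * x ^ d := by ring
    _ < x ^ j * y ^ j * y ^ d := by gcongr
    _ = x ^ j * y ^ (j + d) := by ring

lemma binomialTail_mul_lt_swap_mul (hx : 0 < x) (hxy : x < y) (hn : 2 ≤ n) (hrn : r ≤ n)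
    (hr : n < 2 * r) : binomialTail n r x y * y < binomialTail n r y x * x := by
  have hleft (i : ℕ) : (n.choose i : R) * x ^ i * y ^ (n - i) * y =
      n.choose i * (x ^ i * y ^ (n - i + 1)) := by ring
  have hright (i : ℕ) : (n.choose i : R) * y ^ i * x ^ (n - i) * x =
      n.choose i * (x ^ (n - i + 1) * y ^ i) := by ring
  simp only [binomialTail, sum_mul, hleft, hright]
  refine sum_lt_sum (fun i hi ↦ ?_) ⟨n, right_mem_Icc.mpr hrn, ?_⟩
  · have hri : r ≤ i := (mem_Icc.mp hi).1
    exact mul_le_mul_of_nonneg_left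
      (pow_mul_pow_le_pow_mul_pow_swap hx.le hxy.le (by omega)) (Nat.cast_nonneg _)
  · rw [Nat.choose_self, Nat.cast_one, one_mul, one_mul]
    exact pow_mul_pow_lt_pow_mul_pow_swap hx hxy (by omega)

theorem binomialTail_mul_add_lt (hx : 0 < x) (hxy : x < y) (hn : 2 ≤ n) (hrn : r ≤ n)
    (hr : n < 2 * r) : binomialTail n r x y * (x + y) < (x + y) ^ n * x :=
  calc binomialTail n r x y * (x + y)
      = binomialTail n r x y * x + binomialTail n r x y * y := mul_add ..
    _ < binomialTail n r x y * x + binomialTail n r y x * x := by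
        gcongr _ + ?_
        exact binomialTail_mul_lt_swap_mul hx hxy hn hrn hr
    _ = (binomialTail n r x y + binomialTail n r y x) * x := (add_mul ..).symm
    _ ≤ (x + y) ^ n * x := by
        gcongr
        exact binomialTail_add_swap_le hx.le (hx.trans hxy).le hr

end OrderedSemiring

theorem stmt_18_general {R : Type*} [CommRing R] [PartialOrder R] [IsStrictOrderedRing R]
    {q : R} (hq0 : 0 < q) (hq : q < 1 - q) {K r : ℕ} (hK : 2 ≤ K) (hrK : r ≤ K)
    (hr : K < 2 * r) :
    ∑ i ∈ Icc r K, (K.choose i : R) * q ^ i * (1 - q) ^ (K - i) < q := by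
  simpa only [binomialTail, add_sub_cancel, one_pow, one_mul, mul_one] using
    binomialTail_mul_add_lt hq0 hq hK hrK hr

/-- For `K` i.i.d. Bernoulli(`q`) votes with `0 < q < 1/2` and `K` odd, the
majority-acceptance probability `∑_{i=(K+1)/2}^{K} C(K,i)·q^i·(1-q)^{K-i}` is strictly
less than `q` for all `K ≥ 3`: an odd majority vote of `K ≥ 3` better-than-random
judges has a strictly smaller false-positive rate than a single judge. -/
theorem stmt_18 (q : ℝ) (hq0 : 0 < q) (hq : q < 1 / 2) (K : ℕ) (hodd : Odd K)
    (hK : 3 ≤ K) :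
    ∑ i ∈ Finset.Icc ((K + 1) / 2) K, (K.choose i : ℝ) * q ^ i * (1 - q) ^ (K - i)
      < q := by
  obtain ⟨m, rfl⟩ := hodd
  exact stmt_18_general hq0 (by linarith) (by omega) (by omega) (by omega)
end
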